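/- Let M = 2N with N ≥ 1, and let U be any 2×2 unitary complex matrix. Then there exist reals r, s ≥ 0 with r² + s² = 1, ε ∈ {−1, 1}, and real numbers γ, c₁, χ₁, c₂, χ₂ such that, defining for i ∈ {1,2} the M×M diagonal matrix E_i with entries (E_i)_{l,l} = exp(i·(χ_i + c_i)) for l ∈ {0,…,N−1} and (E_i)_{l,l} = exp(i·(χ_i − c_i)) for l ∈ {N,…,M−1}, and the diagonal matrix D with D_{j,j} = e^{iγ}·(r + ε·i·s·(−1)^j), one has W_k(E₂·(F·D·F†)·E₁) = U for EVERY k ∈ {0,…,N−1}. (Exact parallel synthesis of the same arbitrary single-qubit unitary on all N time-bin qubits simultaneously, corresponding to a square-wave RF driving of the electro-optic modulators.) -/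

import Mathlib

/-!
Modes that differ by `N` in the `2N`-point DFT have characters that agree up to the sign `(-1)^j`:
`F_{k,j} * conj F_{l,j}` is `1/(2N)` if `k = l` and `(-1)^j/(2N)` if `k` and `l` differ by `N`
(`dftM_mul_star_self`, `dftM_mul_star_shift`). The shaper `D` only contains the constant and the
alternating mode, so averaging over `j` shows that on every pair `{k, k+N}` the operator
`F D F†` acts as `e^{iγ} * [[r, iεs], [iεs, r]]`, whatever `k` is. The outer diagonal
matrices then turn it into `e^{iγ} * [[r e^{ip}, i s e^{iq}], [i s e^{-iq}, r e^{-ip}]]` with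
`p = c₁ + c₂` and `q = c₂ - c₁` (taking `ε = 1`, `χ₁ = χ₂ = 0`).

Conversely every 2×2 unitary has this form (`exists_euler`): since `adj U = det U • U†`, dividing by
a square root `e^{iγ}` of `det U` leaves a matrix `[[A, B], [-conj B, conj A]]` with
`|A|² + |B|² = 1`, and `A`, `-iB` are written in polar form.
-/

open Matrix Complex

/-- The discrete Fourier transform matrix `F` with entries
`F_{k,j} = exp(2πi·k·j/M)/√M`. -/
noncomputable def dftM (M : ℕ) : Matrix (Fin M) (Fin M) ℂ :=
  fun k j => Complex.exp (2 * (Real.pi : ℂ) * Complex.I * ((k : ℕ) : ℂ) * ((j : ℕ) : ℂ) / (M : ℂ))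
    / ((Real.sqrt M : ℝ) : ℂ)

/-- The pulse-shaper diagonal matrix `D` with `D_{j,j} = e^{iγ}·(r + ε·i·s·(−1)^j)`. -/
noncomputable def Dmat (N : ℕ) (γ r s ε : ℝ) : Matrix (Fin (2*N)) (Fin (2*N)) ℂ :=
  Matrix.diagonal (fun j => Complex.exp (Complex.I * (γ : ℂ)) *
    ((r : ℂ) + (ε : ℂ) * Complex.I * (s : ℂ) * (-1 : ℂ) ^ (j : ℕ)))

/-- The reduced 2×2 matrix `W_k(V)` on the qubit subspace spanned by modes `k` and `k+N`. -/
noncomputable def Wk {N : ℕ} (V : Matrix (Fin (2*N)) (Fin (2*N)) ℂ) (k : Fin N) :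
    Matrix (Fin 2) (Fin 2) ℂ :=
  !![V ⟨(k : ℕ), by have h := k.isLt; omega⟩ ⟨(k : ℕ), by have h := k.isLt; omega⟩,
     V ⟨(k : ℕ), by have h := k.isLt; omega⟩ ⟨(k : ℕ) + N, by have h := k.isLt; omega⟩;
     V ⟨(k : ℕ) + N, by have h := k.isLt; omega⟩ ⟨(k : ℕ), by have h := k.isLt; omega⟩,
     V ⟨(k : ℕ) + N, by have h := k.isLt; omega⟩ ⟨(k : ℕ) + N, by have h := k.isLt; omega⟩]

/-- Fidelity `F(W,T) = Tr(W†T)·Tr(T†W)/(Tr(W†W)·Tr(T†T))`. -/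
noncomputable def fid (W T : Matrix (Fin 2) (Fin 2) ℂ) : ℂ :=
  (Wᴴ * T).trace * (Tᴴ * W).trace / ((Wᴴ * W).trace * (Tᴴ * T).trace)

/-- Success probability `P(W,T) = Tr(W†W)/Tr(T†T)`. -/
noncomputable def sProb (W T : Matrix (Fin 2) (Fin 2) ℂ) : ℂ :=
  (Wᴴ * W).trace / (Tᴴ * T).trace

/-- `Z(φ) = [[e^{iφ},0],[0,e^{−iφ}]]`. -/
noncomputable def Zmat (φ : ℝ) : Matrix (Fin 2) (Fin 2) ℂ :=
  !![Complex.exp (Complex.I * (φ : ℂ)), 0; 0, Complex.exp (-(Complex.I * (φ : ℂ)))]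

/-- `B(θ) = [[cos θ, i·sin θ],[i·sin θ, cos θ]]`. -/
noncomputable def Bmat (θ : ℝ) : Matrix (Fin 2) (Fin 2) ℂ :=
  !![(Real.cos θ : ℂ), Complex.I * (Real.sin θ : ℂ);
     Complex.I * (Real.sin θ : ℂ), (Real.cos θ : ℂ)]

/-- The Hadamard matrix. -/
noncomputable def Hmat : Matrix (Fin 2) (Fin 2) ℂ :=
  ((1 / Real.sqrt 2 : ℝ) : ℂ) • !![1, 1; 1, -1]

lemma dftM_mul_star_self {M : ℕ} (k j : Fin M) :
    dftM M k j * star (dftM M k j) = 1 / (M : ℂ) := by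
  have hs : ((Real.sqrt M : ℝ) : ℂ) * ((Real.sqrt M : ℝ) : ℂ) = (M : ℂ) := by
    rw [← Complex.ofReal_mul, Real.mul_self_sqrt (Nat.cast_nonneg M), Complex.ofReal_natCast]
  unfold dftM
  rw [Complex.star_def, map_div₀, Complex.conj_ofReal, ← Complex.exp_conj, div_mul_div_comm, hs,
    ← Complex.exp_add]
  simp [neg_div, map_ofNat (starRingEnd ℂ) 2]

/-- Shifting the row index of the DFT matrix by half the period multiplies column `j`
by `exp(πij) = (-1)^j`. -/
lemma dftM_shift {N : ℕ} (hN : 1 ≤ N) (k l j : Fin (2 * N)) (h : (l : ℕ) = k + N) :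
    dftM (2 * N) l j = (-1) ^ (j : ℕ) * dftM (2 * N) k j := by
  have hN' : (N : ℂ) ≠ 0 := by exact_mod_cast (by omega : N ≠ 0)
  unfold dftM
  rw [← Complex.exp_pi_mul_I, ← Complex.exp_nat_mul, ← mul_div_assoc, ← Complex.exp_add, h]
  congr 2
  push_cast
  field_simp
  ring

lemma dftM_mul_star_shift {N : ℕ} (hN : 1 ≤ N) (k l j : Fin (2 * N)) (h : (l : ℕ) = k + N) :
    dftM (2 * N) l j * star (dftM (2 * N) k j) = (-1) ^ (j : ℕ) / ((2 * N : ℕ) : ℂ) ∧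
    dftM (2 * N) k j * star (dftM (2 * N) l j) = (-1) ^ (j : ℕ) / ((2 * N : ℕ) : ℂ) := by
  rw [dftM_shift hN k l j h]
  constructor
  · rw [mul_assoc, dftM_mul_star_self, mul_one_div]
  · rw [star_mul', mul_left_comm, dftM_mul_star_self]
    simp [div_eq_mul_inv]

lemma sum_neg_one_pow (N : ℕ) : ∑ j : Fin (2 * N), (-1 : ℂ) ^ (j : ℕ) = 0 := by
  rw [Fin.sum_univ_eq_sum_range (fun j => (-1 : ℂ) ^ j)]
  induction N with
  | zero => simp
  | succ n ih =>
    rw [Nat.mul_succ, Finset.sum_range_succ, Finset.sum_range_succ, ih, pow_succ]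
    ring

lemma shaper_apply (N : ℕ) (γ r s ε : ℝ) (k l : Fin (2 * N)) :
    (dftM (2 * N) * Dmat N γ r s ε * (dftM (2 * N))ᴴ) k l =
      ∑ j : Fin (2 * N), (Complex.exp (Complex.I * (γ : ℂ)) *
        ((r : ℂ) + (ε : ℂ) * Complex.I * (s : ℂ) * (-1 : ℂ) ^ (j : ℕ))) *
        (dftM (2 * N) k j * star (dftM (2 * N) l j)) := by
  rw [Matrix.mul_apply]
  refine Finset.sum_congr rfl fun j _ => ?_
  rw [Dmat, Matrix.mul_diagonal, Matrix.conjTranspose_apply]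
  ring

/-- Average of a two-mode (constant plus alternating) sequence over a full period. -/
lemma sum_two_mode {N : ℕ} (hN : 1 ≤ N) (x y : ℂ) :
    ∑ j : Fin (2 * N), (x + y * (-1) ^ (j : ℕ)) * (1 / ((2 * N : ℕ) : ℂ)) = x := by
  have hN' : ((2 * N : ℕ) : ℂ) ≠ 0 := by exact_mod_cast (by omega : 2 * N ≠ 0)
  rw [← Finset.sum_mul, Finset.sum_add_distrib, ← Finset.mul_sum, sum_neg_one_pow]
  simp only [Finset.sum_const, Finset.card_univ, Fintype.card_fin, nsmul_eq_mul, mul_zero, add_zero]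
  field_simp

lemma shaper_diag {N : ℕ} (hN : 1 ≤ N) (γ r s ε : ℝ) (k : Fin (2 * N)) :
    (dftM (2 * N) * Dmat N γ r s ε * (dftM (2 * N))ᴴ) k k =
      Complex.exp (Complex.I * (γ : ℂ)) * r := by
  rw [shaper_apply, ← sum_two_mode hN (Complex.exp (Complex.I * (γ : ℂ)) * r)
    (Complex.exp (Complex.I * (γ : ℂ)) * (ε * Complex.I * s))]
  refine Finset.sum_congr rfl fun j _ => ?_
  rw [dftM_mul_star_self]
  ring

lemma shaper_shift {N : ℕ} (hN : 1 ≤ N) (γ r s ε : ℝ) (k l : Fin (2 * N))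
    (h : (l : ℕ) = k + N) :
    (dftM (2 * N) * Dmat N γ r s ε * (dftM (2 * N))ᴴ) l k =
      Complex.exp (Complex.I * (γ : ℂ)) * (ε * Complex.I * s) ∧
    (dftM (2 * N) * Dmat N γ r s ε * (dftM (2 * N))ᴴ) k l =
      Complex.exp (Complex.I * (γ : ℂ)) * (ε * Complex.I * s) := by
  -- Multiplication by `(-1)^j` exchanges the constant and the alternating coefficients.
  have key : ∀ j : ℕ, (Complex.exp (Complex.I * (γ : ℂ)) *
        ((r : ℂ) + (ε : ℂ) * Complex.I * (s : ℂ) * (-1 : ℂ) ^ j)) *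
        ((-1) ^ j / ((2 * N : ℕ) : ℂ)) =
      (Complex.exp (Complex.I * (γ : ℂ)) * (ε * Complex.I * s) +
        Complex.exp (Complex.I * (γ : ℂ)) * r * (-1) ^ j) * (1 / ((2 * N : ℕ) : ℂ)) := by
    intro j
    have hj : (-1 : ℂ) ^ j * (-1) ^ j = 1 := by rw [← mul_pow]; simp
    linear_combination (Complex.exp (Complex.I * (γ : ℂ)) * (ε * Complex.I * s) *
      (1 / ((2 * N : ℕ) : ℂ))) * hj
  constructor <;>
  · rw [shaper_apply, ← sum_two_mode hN (Complex.exp (Complex.I * (γ : ℂ)) * (ε * Complex.I * s))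
      (Complex.exp (Complex.I * (γ : ℂ)) * r)]
    refine Finset.sum_congr rfl fun j _ => ?_
    first
    | rw [(dftM_mul_star_shift hN k l j h).1, key]
    | rw [(dftM_mul_star_shift hN k l j h).2, key]

/-- Euler-angle form of a 2×2 unitary: a global phase, two moduli and two relative phases. -/
lemma exists_euler (U : Matrix (Fin 2) (Fin 2) ℂ) (hU : U ∈ Matrix.unitaryGroup (Fin 2) ℂ) :
    ∃ r s γ p q : ℝ, 0 ≤ r ∧ 0 ≤ s ∧ r ^ 2 + s ^ 2 = 1 ∧
      U 0 0 = Complex.exp (Complex.I * γ) * (r * Complex.exp (Complex.I * p)) ∧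
      U 0 1 = Complex.exp (Complex.I * γ) * (Complex.I * s * Complex.exp (Complex.I * q)) ∧
      U 1 0 = Complex.exp (Complex.I * γ) * (Complex.I * s * Complex.exp (-(Complex.I * q))) ∧
      U 1 1 = Complex.exp (Complex.I * γ) * (r * Complex.exp (-(Complex.I * p))) := by
  have h1 : U * star U = 1 := Matrix.mem_unitaryGroup_iff.1 hU
  have hadj : U.adjugate = U.det • star U := by
    calc U.adjugate = U.adjugate * (U * star U) := by rw [h1, mul_one]
      _ = U.det • star U := by
        rw [← mul_assoc, Matrix.adjugate_mul, Matrix.smul_mul, one_mul]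
  have hd : U 1 1 = U.det * star (U 0 0) := by
    simpa [Matrix.adjugate_fin_two, Matrix.star_apply] using congrFun (congrFun hadj 0) 0
  have hc : -U 1 0 = U.det * star (U 0 1) := by
    simpa [Matrix.adjugate_fin_two, Matrix.star_apply] using congrFun (congrFun hadj 1) 0
  have hrow : U 0 0 * star (U 0 0) + U 0 1 * star (U 0 1) = 1 := by
    simpa [Matrix.mul_apply, Fin.sum_univ_two, Matrix.star_apply] using
      congrFun (congrFun h1 0) 0
  have hdet : ‖U.det‖ = 1 := CStarRing.norm_of_mem_unitary (Matrix.det_of_mem_unitary hU)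
  -- `g` is a square root of `det U` on the unit circle.
  obtain ⟨γ, hγ⟩ : ∃ γ : ℝ, U.det = Complex.exp (Complex.I * γ) * Complex.exp (Complex.I * γ) := by
    refine ⟨U.det.arg / 2, ?_⟩
    rw [← Complex.exp_add]
    conv_lhs => rw [← Complex.norm_mul_exp_arg_mul_I U.det, hdet]
    push_cast
    rw [one_mul]
    congr 1
    ring
  set g := Complex.exp (Complex.I * γ) with hg
  have hgg : g * star g = 1 := by
    rw [hg, Complex.star_def, ← Complex.exp_conj, ← Complex.exp_add]
    simp
  have hng : ‖star g‖ = 1 := by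
    rw [norm_star, hg, mul_comm, Complex.norm_exp_ofReal_mul_I]
  have conj_exp : ∀ x : ℝ, star (Complex.exp (Complex.I * x)) = Complex.exp (-(Complex.I * x)) := by
    intro x
    rw [Complex.star_def, ← Complex.exp_conj]
    simp
  have hA : star g * U 0 0 = ‖U 0 0‖ * Complex.exp (Complex.I * (star g * U 0 0).arg) := by
    conv_lhs => rw [← Complex.norm_mul_exp_arg_mul_I (star g * U 0 0)]
    rw [norm_mul, hng, one_mul, mul_comm Complex.I]
  have hB : -Complex.I * (star g * U 0 1) =
      ‖U 0 1‖ * Complex.exp (Complex.I * (-Complex.I * (star g * U 0 1)).arg) := by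
    conv_lhs => rw [← Complex.norm_mul_exp_arg_mul_I (-Complex.I * (star g * U 0 1))]
    rw [norm_mul, norm_mul, hng, norm_neg, Complex.norm_I, one_mul, one_mul, mul_comm Complex.I]
  set p := (star g * U 0 0).arg
  set q := (-Complex.I * (star g * U 0 1)).arg
  have ha : U 0 0 = g * (‖U 0 0‖ * Complex.exp (Complex.I * p)) := by
    rw [← hA]; linear_combination (-U 0 0) * hgg
  have hb : U 0 1 = g * (Complex.I * ‖U 0 1‖ * Complex.exp (Complex.I * q)) := by
    rw [mul_assoc Complex.I, ← hB]
    linear_combination (-U 0 1) * hgg + (g * star g * U 0 1) * Complex.I_sq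
  refine ⟨‖U 0 0‖, ‖U 0 1‖, γ, p, q, norm_nonneg _, norm_nonneg _, ?_, ha, hb, ?_, ?_⟩
  · rw [Complex.star_def, Complex.mul_conj', Complex.mul_conj'] at hrow
    exact_mod_cast hrow
  · have hb' : star (U 0 1) =
        star g * (-Complex.I * ‖U 0 1‖ * Complex.exp (-(Complex.I * q))) := by
      conv_lhs => rw [hb]
      rw [star_mul', star_mul', star_mul', conj_exp q]
      simp
    rw [hb', hγ] at hc
    linear_combination -hc + (g * Complex.I * ‖U 0 1‖ * Complex.exp (-(Complex.I * q))) * hgg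
  · have ha' : star (U 0 0) = star g * (‖U 0 0‖ * Complex.exp (-(Complex.I * p))) := by
      conv_lhs => rw [ha]
      rw [star_mul', star_mul', conj_exp p]
      simp
    rw [ha', hγ] at hd
    linear_combination hd + (g * ‖U 0 0‖ * Complex.exp (-(Complex.I * p))) * hgg

/-- exact parallel synthesis of the same arbitrary single-qubit
unitary on all `N` time-bin qubits simultaneously (square-wave RF driving). -/
theorem exact_parallel_synthesis_EPE (N : ℕ) (hN : 1 ≤ N)
    (U : Matrix (Fin 2) (Fin 2) ℂ) (hU : U ∈ Matrix.unitaryGroup (Fin 2) ℂ) :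
    ∃ (r s ε γ c₁ χ₁ c₂ χ₂ : ℝ),
      0 ≤ r ∧ 0 ≤ s ∧ r ^ 2 + s ^ 2 = 1 ∧ (ε = -1 ∨ ε = 1) ∧
      ∀ k : Fin N,
        Wk (Matrix.diagonal (fun l : Fin (2*N) =>
              if (l : ℕ) < N then Complex.exp (Complex.I * ((χ₂ + c₂ : ℝ) : ℂ))
              else Complex.exp (Complex.I * ((χ₂ - c₂ : ℝ) : ℂ)))
            * (dftM (2*N) * Dmat N γ r s ε * (dftM (2*N))ᴴ)
            * Matrix.diagonal (fun l : Fin (2*N) =>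
              if (l : ℕ) < N then Complex.exp (Complex.I * ((χ₁ + c₁ : ℝ) : ℂ))
              else Complex.exp (Complex.I * ((χ₁ - c₁ : ℝ) : ℂ)))) k = U := by
  obtain ⟨r, s, γ, p, q, hr, hs, hrs, h00, h01, h10, h11⟩ := exists_euler U hU
  refine ⟨r, s, 1, γ, (p - q) / 2, 0, (p + q) / 2, 0, hr, hs, hrs, Or.inr rfl, fun k => ?_⟩
  have hk : ((k : ℕ)) < N := k.isLt
  have hk' : ¬ ((k : ℕ) + N < N) := by omega
  -- The two outer phases combine into a single exponential in every entry.
  have hexp : ∀ (x y z : ℝ) (w g : ℂ), x + y = z →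
      Complex.exp (Complex.I * (x : ℂ)) * (g * w) * Complex.exp (Complex.I * (y : ℂ)) =
        g * (w * Complex.exp (Complex.I * (z : ℂ))) := by
    intro x y z w g h
    rw [← h, Complex.ofReal_add, mul_add, Complex.exp_add]
    ring
  have hneg : ∀ x : ℝ, -(Complex.I * (x : ℂ)) = Complex.I * ((-x : ℝ) : ℂ) := by
    intro x; push_cast; ring
  rw [hneg] at h10 h11
  have hsh := shaper_shift hN γ r s 1 ⟨(k : ℕ), by omega⟩ ⟨(k : ℕ) + N, by omega⟩ rfl
  rw [Complex.ofReal_one, one_mul] at hsh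
  ext i j
  fin_cases i <;> fin_cases j <;>
    simp only [Wk, Matrix.mul_diagonal, Matrix.diagonal_mul, shaper_diag hN, hsh.1, hsh.2, hk, hk',
      if_true, if_false, Matrix.of_apply, Matrix.cons_val', Matrix.cons_val_zero,
      Matrix.cons_val_one, Matrix.cons_val_fin_one, Fin.zero_eta, Fin.mk_one, Fin.isValue]
  · rw [h00]; exact hexp _ _ _ _ _ (by ring)
  · rw [h01]; exact hexp _ _ _ _ _ (by ring)
  · rw [h10]; exact hexp _ _ _ _ _ (by ring)
  · rw [h11]; exact hexp _ _ _ _ _ (by ring)
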